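/- arXiv:2511.08285 — 2 statements merged into one kernel-verified Lean document; each statement's English description precedes it below -/
import Mathlib

section
/- Let λ1 ≥ λ2 ≥ λ3 > 0 with λ1 + λ2 + λ3 = 1 and λ1 ≠ λ3. Then there exists ε > 0 such that the matrix ρ_λ(ε) = λ1 Φ1(ε) + λ2 |01⟩⟨01| + λ3 Φ2 is a two-qubit density matrix with eigenvalues λ1, λ2, λ3, 0 (hence isospectral to ρ_λ = λ1 Φ1 + λ2 |01⟩⟨01| + λ3 Φ2) that is not separable, and there exists no SEP map Λ satisfying Λ(ρ_λ) = ρ_λ(ε). -/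
open Matrix Kronecker Polynomial
open scoped ComplexOrder

noncomputable section

/-- Index set for two qubits: ℂ²⊗ℂ² ≅ ℂ⁴ with basis |00⟩,|01⟩,|10⟩,|11⟩. -/
abbrev Q2 : Type := Fin 2 × Fin 2
abbrev Mat2 : Type := Matrix (Fin 2) (Fin 2) ℂ
abbrev Mat4 : Type := Matrix Q2 Q2 ℂ
abbrev Vec4 : Type := Q2 → ℂ

/-- Computational basis vector |ij⟩. -/
def ket (i j : Fin 2) : Vec4 := fun p => if p = (i, j) then 1 else 0

/-- The rank-one matrix |ψ⟩⟨φ|. -/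
def ketBra (ψ φ : Vec4) : Mat4 := fun p q => ψ p * star (φ q)

/-- The four Bell vectors |Φ1⟩,…,|Φ4⟩. -/
def bell : Fin 4 → Vec4 :=
  ![(Real.sqrt 2 : ℂ)⁻¹ • (ket 0 0 + ket 1 1),
    (Real.sqrt 2 : ℂ)⁻¹ • (ket 0 0 - ket 1 1),
    (Real.sqrt 2 : ℂ)⁻¹ • (ket 1 0 + ket 0 1),
    (Real.sqrt 2 : ℂ)⁻¹ • (ket 1 0 - ket 0 1)]

/-- Bell projectors Φ_i = |Φ_i⟩⟨Φ_i|. -/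
def bellProj (i : Fin 4) : Mat4 := ketBra (bell i) (bell i)

/-- A two-qubit density matrix: Hermitian positive semidefinite with trace one. -/
def IsDensity (ρ : Mat4) : Prop := ρ.PosSemidef ∧ ρ.trace = 1

/-- Unit vector in ℂ². -/
def IsUnitVec (u : Fin 2 → ℂ) : Prop := ∑ x, Complex.normSq (u x) = 1

/-- Separable two-qubit density matrix: convex mixture of products of pure states. -/
def SepState (ρ : Mat4) : Prop :=
  ∃ (n : ℕ) (p : Fin n → ℝ) (u v : Fin n → Fin 2 → ℂ),
    (∀ i, 0 ≤ p i) ∧ (∑ i, p i = 1) ∧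
    (∀ i, IsUnitVec (u i)) ∧ (∀ i, IsUnitVec (v i)) ∧
    ρ = ∑ i, (p i : ℂ) • (vecMulVec (u i) (star (u i)) ⊗ₖ vecMulVec (v i) (star (v i)))

/-- A SEP map: Kraus operators in product form, trace preserving. -/
def IsSEP (T : Mat4 → Mat4) : Prop :=
  ∃ (k : ℕ) (A B : Fin k → Mat2),
    (∑ i, (A i ⊗ₖ B i)ᴴ * (A i ⊗ₖ B i) = 1) ∧
    ∀ X, T X = ∑ i, (A i ⊗ₖ B i) * X * (A i ⊗ₖ B i)ᴴ

/-- CPTP map in Kraus form. -/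
def IsCPTP (T : Mat4 → Mat4) : Prop :=
  ∃ (k : ℕ) (K : Fin k → Mat4),
    (∑ i, (K i)ᴴ * K i = 1) ∧ ∀ X, T X = ∑ i, K i * X * (K i)ᴴ

/-- Non-entangling (NE) map: CPTP and maps separable states to separable states. -/
def IsNE (T : Mat4 → Mat4) : Prop :=
  IsCPTP T ∧ ∀ ρ, SepState ρ → SepState (T ρ)

/-- The MEMS state ρ_λ = λ1 Φ1 + λ2 |01⟩⟨01| + λ3 Φ2 + λ4 |10⟩⟨10|. -/
def mems (l1 l2 l3 l4 : ℝ) : Mat4 :=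
  (l1 : ℂ) • bellProj 0 + (l2 : ℂ) • ketBra (ket 0 1) (ket 0 1) +
  (l3 : ℂ) • bellProj 1 + (l4 : ℂ) • ketBra (ket 1 0) (ket 1 0)

/-- The Bell-diagonal state σ_λ = λ1 Φ1 + λ2 Φ2 + λ3 Φ3 + λ4 Φ4. -/
def bdiag (l1 l2 l3 l4 : ℝ) : Mat4 :=
  (l1 : ℂ) • bellProj 0 + (l2 : ℂ) • bellProj 1 + (l3 : ℂ) • bellProj 2 + (l4 : ℂ) • bellProj 3

/-- The normalized vector |Φ1(ε)⟩ = (|Φ1⟩ + ε|10⟩)/√(1+ε²). -/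
def phi1eps (ε : ℝ) : Vec4 :=
  (Real.sqrt (1 + ε ^ 2) : ℂ)⁻¹ • (bell 0 + (ε : ℂ) • ket 1 0)

/-- ρ_λ(ε) = λ1 Φ1(ε) + λ2 |01⟩⟨01| + λ3 Φ2. -/
def rho3eps (l1 l2 l3 ε : ℝ) : Mat4 :=
  (l1 : ℂ) • ketBra (phi1eps ε) (phi1eps ε) + (l2 : ℂ) • ketBra (ket 0 1) (ket 0 1) +
    (l3 : ℂ) • bellProj 1

/-!
Write `χ(ε)` for a vector spanning the kernel of `ρ(ε)`. If `ρ(ε) = ∑ K_i ρ(0) K_iᴴ` with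
`K_i = A_i ⊗ B_i`, positivity of each summand forces every `K_iᴴ` to map `χ(ε)` into the kernel of
`ρ(0)`, which is spanned by the product vector `|10⟩`. A product operator `A ⊗ B` multiplies the
determinant of the 2×2 coefficient matrix of a vector by `det A * det B`; this determinant is
nonzero at `χ(ε)` for `ε ≠ 0` and vanishes at `|10⟩`, so `det A_i * det B_i = 0`. Hence each `K_i`
sends every vector to a product vector, and `ρ(ε)` would have positive partial transpose. A 2×2
minor of the partial transpose, which is strictly negative at `ε = 0` because `λ1 ≠ λ3`, excludes
this for `ε` near `0`, and excludes separability as well.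
-/

section RankOne

variable {m n R : Type*}

/-- The coefficient matrix of a bipartite vector `∑ v (i, j) |i⟩ ⊗ |j⟩`. A two-qubit vector is a
product vector exactly when the determinant of its coefficient matrix vanishes. -/
def coeffMatrix (v : m × n → R) : Matrix m n R := of fun i j => v (i, j)

lemma coeffMatrix_kronecker_mulVec {k l : Type*} [CommSemiring R] [Fintype m] [Fintype n]
    (A : Matrix k m R) (B : Matrix l n R) (v : m × n → R) :
    coeffMatrix ((A ⊗ₖ B) *ᵥ v) = A * coeffMatrix v * Bᵀ :=
  calc coeffMatrix ((A ⊗ₖ B) *ᵥ v) = (B * (coeffMatrix v)ᵀ * Aᵀ)ᵀ :=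
        congr_arg coeffMatrix (kronecker_mulVec_vec B (coeffMatrix v)ᵀ A)
    _ = A * coeffMatrix v * Bᵀ := by
        simp only [transpose_mul, transpose_transpose, Matrix.mul_assoc]

lemma det_coeffMatrix_kronecker_mulVec [CommRing R] [Fintype n] [DecidableEq n]
    (A B : Matrix n n R) (v : n × n → R) :
    (coeffMatrix ((A ⊗ₖ B) *ᵥ v)).det = A.det * B.det * (coeffMatrix v).det := by
  rw [coeffMatrix_kronecker_mulVec, det_mul, det_mul, det_transpose, mul_right_comm]

lemma vecMulVec_star_eq_kronecker [CommSemiring R] [StarRing R] {v : m × n → R} {a : m → R}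
    {b : n → R} (hv : coeffMatrix v = vecMulVec a b) :
    vecMulVec v (star v) = vecMulVec a (star a) ⊗ₖ vecMulVec b (star b) := by
  have hv' (p : m × n) : v p = a p.1 * b p.2 := congr_fun₂ hv p.1 p.2
  ext p q
  simp only [vecMulVec_apply, kroneckerMap_apply, Pi.star_apply, hv', star_mul']
  ring

lemma exists_eq_vecMulVec_of_det_eq_zero {K : Type*} [Field K] {M : Matrix (Fin 2) (Fin 2) K}
    (hM : M.det = 0) : ∃ a b, M = vecMulVec a b := by
  rw [det_fin_two, sub_eq_zero] at hM
  by_cases h0 : M 0 = 0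
  · refine ⟨![0, 1], M 1, ?_⟩
    ext i k
    fin_cases i <;> simp [vecMulVec_apply, h0]
  · obtain ⟨j, hj⟩ : ∃ j, M 0 j ≠ 0 := Function.ne_iff.mp h0
    have hrow (k : Fin 2) : M 1 k * M 0 j = M 1 j * M 0 k := by
      fin_cases j <;> fin_cases k <;> grind
    refine ⟨![1, M 1 j / M 0 j], M 0, ?_⟩
    ext i k
    fin_cases i
    · simp [vecMulVec_apply]
    · simp [vecMulVec_apply, div_mul_eq_mul_div, eq_div_iff hj, hrow]

end RankOne

section PartialTranspose

/-- Transposition of the second tensor factor, the map of the Peres–Horodecki criterion. -/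
def partialTranspose {m n R : Type*} [CommSemiring R] :
    Matrix (m × n) (m × n) R →ₗ[R] Matrix (m × n) (m × n) R where
  toFun M := of fun p q => M (p.1, q.2) (q.1, p.2)
  map_add' _ _ := rfl
  map_smul' _ _ := rfl

lemma partialTranspose_kronecker {m n R : Type*} [CommSemiring R] (A : Matrix m m R)
    (B : Matrix n n R) : partialTranspose (A ⊗ₖ B) = A ⊗ₖ Bᵀ := rfl

variable {m n 𝕜 : Type*} [RCLike 𝕜]

lemma posSemidef_partialTranspose_kronecker [Finite m] [Finite n]
    {A : Matrix m m 𝕜} {B : Matrix n n 𝕜} (hA : A.PosSemidef) (hB : B.PosSemidef) :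
    (partialTranspose (A ⊗ₖ B)).PosSemidef := by
  rw [partialTranspose_kronecker]
  exact hA.kronecker hB.transpose

lemma norm_apply_sq_le_of_posSemidef {M : Matrix n n 𝕜} (hM : M.PosSemidef) (i j : n) :
    (‖M i j‖ ^ 2 : 𝕜) ≤ M i i * M j j := by
  have hdet := (hM.submatrix ![i, j]).det_nonneg
  rw [← RCLike.mul_conj, starRingEnd_apply, hM.isHermitian.apply j i]
  simpa only [det_fin_two, submatrix_apply, cons_val_zero, cons_val_one, sub_nonneg] using hdet

lemma norm_apply_sq_le_of_posSemidef_partialTranspose {M : Matrix (m × n) (m × n) 𝕜}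
    (hM : (partialTranspose M).PosSemidef) (i k : m) (j l : n) :
    (‖M (i, j) (k, l)‖ ^ 2 : 𝕜) ≤ M (i, l) (i, l) * M (k, j) (k, j) :=
  norm_apply_sq_le_of_posSemidef hM (i, l) (k, j)

lemma posSemidef_partialTranspose_kraus {A B : Matrix (Fin 2) (Fin 2) 𝕜} (hAB : A.det * B.det = 0)
    {ρ : Matrix (Fin 2 × Fin 2) (Fin 2 × Fin 2) 𝕜} (hρ : ρ.PosSemidef) :
    (partialTranspose ((A ⊗ₖ B) * ρ * (A ⊗ₖ B)ᴴ)).PosSemidef := by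
  obtain ⟨N, v, rfl⟩ := posSemidef_iff_eq_sum_vecMulVec.mp hρ
  simp only [Finset.mul_sum, Finset.sum_mul, mul_vecMulVec, vecMulVec_mul, ← star_mulVec, map_sum]
  refine posSemidef_sum _ fun i _ => ?_
  have hdet : (coeffMatrix ((A ⊗ₖ B) *ᵥ v i)).det = 0 := by
    rw [det_coeffMatrix_kronecker_mulVec, hAB, zero_mul]
  obtain ⟨a, b, hab⟩ := exists_eq_vecMulVec_of_det_eq_zero hdet
  rw [vecMulVec_star_eq_kronecker hab]
  exact posSemidef_partialTranspose_kronecker (posSemidef_vecMulVec_self_star a)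
    (posSemidef_vecMulVec_self_star b)

lemma mulVec_conjTranspose_eq_zero_of_sum_kraus {ι : Type*} [Fintype ι] [Fintype m] [Fintype n]
    {K : ι → Matrix m n 𝕜} {ρ : Matrix n n 𝕜} (hρ : ρ.PosSemidef) {x : m → 𝕜}
    (hx : (∑ i, K i * ρ * (K i)ᴴ) *ᵥ x = 0) (i : ι) : ρ *ᵥ ((K i)ᴴ *ᵥ x) = 0 := by
  have hform (j : ι) : star x ⬝ᵥ (K j * ρ * (K j)ᴴ) *ᵥ x =
      star ((K j)ᴴ *ᵥ x) ⬝ᵥ ρ *ᵥ ((K j)ᴴ *ᵥ x) := by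
    rw [star_mulVec, conjTranspose_conjTranspose, ← dotProduct_mulVec, mulVec_mulVec, mulVec_mulVec,
      Matrix.mul_assoc]
  have hsum : ∑ j, star x ⬝ᵥ (K j * ρ * (K j)ᴴ) *ᵥ x = 0 := by
    rw [← dotProduct_sum, ← sum_mulVec, hx, dotProduct_zero]
  rw [← hρ.dotProduct_mulVec_zero_iff, ← hform]
  exact (Finset.sum_eq_zero_iff_of_nonneg fun j _ =>
    (hρ.mul_mul_conjTranspose_same (K j)).dotProduct_mulVec_nonneg x).mp hsum i (Finset.mem_univ i)

end PartialTranspose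

theorem SepState.posSemidef_partialTranspose {ρ : Mat4} (hρ : SepState ρ) :
    (partialTranspose ρ).PosSemidef := by
  obtain ⟨N, p, u, v, hp, -, -, -, rfl⟩ := hρ
  simp only [map_sum, map_smul]
  refine posSemidef_sum _ fun i _ => PosSemidef.smul ?_ (by exact_mod_cast hp i)
  exact posSemidef_partialTranspose_kronecker (posSemidef_vecMulVec_self_star (u i))
    (posSemidef_vecMulVec_self_star (v i))

theorem IsSEP.posSemidef_partialTranspose {T : Mat4 → Mat4} (hT : IsSEP T) {ρ : Mat4}
    (hρ : ρ.PosSemidef) (hker : ∀ y, ρ *ᵥ y = 0 → (coeffMatrix y).det = 0) {x : Vec4}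
    (hx : T ρ *ᵥ x = 0) (hdet : (coeffMatrix x).det ≠ 0) :
    (partialTranspose (T ρ)).PosSemidef := by
  obtain ⟨k, A, B, -, hT⟩ := hT
  rw [hT] at hx ⊢
  rw [map_sum]
  refine posSemidef_sum _ fun i _ => posSemidef_partialTranspose_kraus ?_ hρ
  have hi := hker _ (mulVec_conjTranspose_eq_zero_of_sum_kraus hρ hx i)
  rw [conjTranspose_kronecker, det_coeffMatrix_kronecker_mulVec, det_conjTranspose,
    det_conjTranspose, ← star_mul'] at hi
  exact star_eq_zero.mp ((mul_eq_zero.mp hi).resolve_right hdet)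

section Spectral

variable {n R : Type*} [Fintype n] [DecidableEq n] [CommRing R] [StarRing R] {U : Matrix n n R}

lemma mul_diagonal_mul_conjTranspose_eq_sum (U : Matrix n n R) (d : n → R) :
    U * diagonal d * Uᴴ = ∑ i, d i • vecMulVec (U.col i) (star (U.col i)) := by
  ext p q
  rw [mul_apply, Matrix.sum_apply]
  refine Finset.sum_congr rfl fun i _ => ?_
  simp only [mul_diagonal, conjTranspose_apply, Matrix.smul_apply, vecMulVec_apply, col_apply,
    Pi.star_apply, smul_eq_mul]
  ring

lemma charpoly_mul_diagonal_mul_conjTranspose (hU : Uᴴ * U = 1) (d : n → R) :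
    (U * diagonal d * Uᴴ).charpoly = ∏ i, (X - C (d i)) := by
  rw [charpoly_mul_comm, ← Matrix.mul_assoc, hU, Matrix.one_mul, charpoly_diagonal]

lemma trace_mul_diagonal_mul_conjTranspose (hU : Uᴴ * U = 1) (d : n → R) :
    (U * diagonal d * Uᴴ).trace = ∑ i, d i := by
  rw [trace_mul_comm, ← Matrix.mul_assoc, hU, Matrix.one_mul, trace_diagonal]

lemma mul_diagonal_mul_conjTranspose_mulVec_col (hU : Uᴴ * U = 1) (d : n → R) (k : n) :
    (U * diagonal d * Uᴴ) *ᵥ U.col k = d k • U.col k := by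
  have hcol : Uᴴ *ᵥ U.col k = Pi.single k 1 := by
    rw [← mulVec_single_one, mulVec_mulVec, hU, one_mulVec]
  rw [← mulVec_mulVec, ← mulVec_mulVec, hcol, diagonal_mulVec_single, mulVec_single, mul_one,
    op_smul_eq_smul]

lemma exists_eq_smul_col_of_mulVec_eq_zero [NoZeroDivisors R] (hU : Uᴴ * U = 1) {d : n → R}
    {k : n} (hd : ∀ i ≠ k, d i ≠ 0) {x : n → R} (hx : (U * diagonal d * Uᴴ) *ᵥ x = 0) :
    ∃ c : R, x = c • U.col k := by
  have hdiag : diagonal d *ᵥ (Uᴴ *ᵥ x) = 0 := by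
    simpa [← Matrix.mul_assoc, hU] using congr_arg (Uᴴ *ᵥ ·) hx
  have hsupp : Uᴴ *ᵥ x = (Uᴴ *ᵥ x) k • Pi.single k 1 := by
    ext i
    obtain rfl | hik := eq_or_ne i k
    · simp
    · have hi := congr_fun hdiag i
      rw [mulVec_diagonal] at hi
      simpa [hik] using (mul_eq_zero.mp hi).resolve_left (hd i hik)
  refine ⟨(Uᴴ *ᵥ x) k, ?_⟩
  rw [← mulVec_single_one, ← mulVec_smul, ← hsupp, mulVec_mulVec, mul_eq_one_comm.mp hU, one_mulVec]

end Spectral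

section Family

open scoped Topology

/-- An orthonormal eigenbasis of `rho3eps l1 l2 l3 ε`, as the columns of a matrix. The column
`(1, 0)` spans the kernel. -/
def eigenbasis (ε : ℝ) : Mat4 := of fun p q =>
  ![![phi1eps ε, ket 0 1],
    ![(Real.sqrt (1 + ε ^ 2) : ℂ)⁻¹ • (ket 1 0 - (ε : ℂ) • bell 0), bell 1]] q.1 q.2 p

/-- The eigenvalues of `rho3eps l1 l2 l3 ε`, in the order of the columns of `eigenbasis ε`. -/
def eigenvalue (l1 l2 l3 : ℝ) : Q2 → ℂ := fun q => ![![(l1 : ℂ), l2], ![0, l3]] q.1 q.2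

lemma inv_sqrt_two_sq : (Real.sqrt 2 : ℂ)⁻¹ ^ 2 = 2⁻¹ := by
  rw [inv_pow, ← Complex.ofReal_pow, Real.sq_sqrt zero_le_two, Complex.ofReal_ofNat]

lemma inv_sqrt_one_add_sq_sq (ε : ℝ) :
    (Real.sqrt (1 + ε ^ 2) : ℂ)⁻¹ ^ 2 = ((1 + ε ^ 2 : ℝ) : ℂ)⁻¹ := by
  rw [inv_pow, ← Complex.ofReal_pow, Real.sq_sqrt (by positivity)]

lemma one_add_sq_ne_zero (ε : ℝ) : ((1 + ε ^ 2 : ℝ) : ℂ) ≠ 0 :=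
  Complex.ofReal_ne_zero.mpr (by positivity)

lemma eigenbasis_conjTranspose_mul_self (ε : ℝ) : (eigenbasis ε)ᴴ * eigenbasis ε = 1 := by
  have hr := inv_sqrt_two_sq
  have hq : (Real.sqrt (1 + ε ^ 2) : ℂ)⁻¹ ^ 2 * (1 + (ε : ℂ) ^ 2) = 1 := by
    have := inv_mul_cancel₀ (one_add_sq_ne_zero ε)
    rw [inv_sqrt_one_add_sq_sq]
    push_cast at this ⊢
    exact this
  ext ⟨i, j⟩ ⟨k, l⟩
  fin_cases i <;> fin_cases j <;> fin_cases k <;> fin_cases l <;>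
    simp [mul_apply, Fintype.sum_prod_type, eigenbasis, phi1eps, bell, ket] <;> grind

lemma rho3eps_eq_mul_diagonal_mul_conjTranspose (l1 l2 l3 ε : ℝ) :
    rho3eps l1 l2 l3 ε =
      eigenbasis ε * diagonal (eigenvalue l1 l2 l3) * (eigenbasis ε)ᴴ := by
  rw [mul_diagonal_mul_conjTranspose_eq_sum]
  simp only [Fintype.sum_prod_type, Fin.sum_univ_two, eigenvalue, cons_val_zero, cons_val_one,
    zero_smul, zero_add]
  rfl

lemma charpoly_rho3eps (l1 l2 l3 ε : ℝ) : (rho3eps l1 l2 l3 ε).charpoly =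
    (X - C (l1 : ℂ)) * (X - C (l2 : ℂ)) * (X - C (l3 : ℂ)) * X := by
  rw [rho3eps_eq_mul_diagonal_mul_conjTranspose,
    charpoly_mul_diagonal_mul_conjTranspose (eigenbasis_conjTranspose_mul_self ε)]
  simp only [Fintype.prod_prod_type, Fin.prod_univ_two, eigenvalue, cons_val_zero, cons_val_one,
    map_zero, sub_zero]
  ring

lemma posSemidef_rho3eps {l1 l2 l3 : ℝ} (h1 : 0 ≤ l1) (h2 : 0 ≤ l2) (h3 : 0 ≤ l3) (ε : ℝ) :
    (rho3eps l1 l2 l3 ε).PosSemidef := by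
  rw [rho3eps_eq_mul_diagonal_mul_conjTranspose]
  refine PosSemidef.mul_mul_conjTranspose_same (PosSemidef.diagonal ?_) _
  rintro ⟨i, j⟩
  fin_cases i <;> fin_cases j <;> simp [eigenvalue, h1, h2, h3]

lemma trace_rho3eps (l1 l2 l3 ε : ℝ) : (rho3eps l1 l2 l3 ε).trace = l1 + l2 + l3 := by
  rw [rho3eps_eq_mul_diagonal_mul_conjTranspose,
    trace_mul_diagonal_mul_conjTranspose (eigenbasis_conjTranspose_mul_self ε)]
  simp [Fintype.sum_prod_type, eigenvalue]

lemma rho3eps_mulVec_eigenbasis_col (l1 l2 l3 ε : ℝ) :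
    rho3eps l1 l2 l3 ε *ᵥ (eigenbasis ε).col (1, 0) = 0 := by
  rw [rho3eps_eq_mul_diagonal_mul_conjTranspose,
    mul_diagonal_mul_conjTranspose_mulVec_col (eigenbasis_conjTranspose_mul_self ε)]
  simp [eigenvalue]

lemma det_coeffMatrix_eigenbasis_col (ε : ℝ) :
    (coeffMatrix ((eigenbasis ε).col (1, 0))).det = (ε ^ 2 / (1 + ε ^ 2) / 2 : ℝ) := by
  have hdet : (coeffMatrix ((eigenbasis ε).col (1, 0))).det =
      ε ^ 2 * (Real.sqrt 2 : ℂ)⁻¹ ^ 2 * (Real.sqrt (1 + ε ^ 2) : ℂ)⁻¹ ^ 2 := by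
    simp [coeffMatrix, eigenbasis, bell, ket, det_fin_two]
    ring
  rw [hdet, inv_sqrt_two_sq, inv_sqrt_one_add_sq_sq]
  push_cast
  ring

lemma det_coeffMatrix_eq_zero_of_rho3eps_mulVec_eq_zero {l1 l2 l3 : ℝ} (h1 : l1 ≠ 0) (h2 : l2 ≠ 0)
    (h3 : l3 ≠ 0) {y : Vec4} (hy : rho3eps l1 l2 l3 0 *ᵥ y = 0) : (coeffMatrix y).det = 0 := by
  have hd : ∀ q ≠ ((1, 0) : Q2), eigenvalue l1 l2 l3 q ≠ 0 := by
    rintro ⟨i, j⟩ hq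
    fin_cases i <;> fin_cases j <;> simp_all [eigenvalue]
  rw [rho3eps_eq_mul_diagonal_mul_conjTranspose] at hy
  obtain ⟨c, rfl⟩ :=
    exists_eq_smul_col_of_mulVec_eq_zero (eigenbasis_conjTranspose_mul_self 0) hd hy
  have hsmul : coeffMatrix (c • (eigenbasis 0).col (1, 0)) =
      c • coeffMatrix ((eigenbasis 0).col (1, 0)) := rfl
  rw [hsmul, det_smul, det_coeffMatrix_eigenbasis_col]
  simp

lemma rho3eps_apply_zero_one (l1 l2 l3 ε : ℝ) : rho3eps l1 l2 l3 ε (0, 1) (0, 1) = l2 := by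
  simp [rho3eps, bellProj, ketBra, phi1eps, bell, ket]

lemma rho3eps_apply_one_zero (l1 l2 l3 ε : ℝ) :
    rho3eps l1 l2 l3 ε (1, 0) (1, 0) = (l1 * ε ^ 2 / (1 + ε ^ 2) : ℝ) := by
  have h : rho3eps l1 l2 l3 ε (1, 0) (1, 0) =
      l1 * ε ^ 2 * (Real.sqrt (1 + ε ^ 2) : ℂ)⁻¹ ^ 2 := by
    simp [rho3eps, bellProj, ketBra, phi1eps, bell, ket]
    ring
  rw [h, inv_sqrt_one_add_sq_sq, ← div_eq_mul_inv]
  push_cast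
  rfl

lemma rho3eps_apply_coherence (l1 l2 l3 ε : ℝ) :
    rho3eps l1 l2 l3 ε (0, 0) (1, 1) = ((l1 / (1 + ε ^ 2) - l3) / 2 : ℝ) := by
  have h : rho3eps l1 l2 l3 ε (0, 0) (1, 1) =
      (l1 * (Real.sqrt (1 + ε ^ 2) : ℂ)⁻¹ ^ 2 - l3) * (Real.sqrt 2 : ℂ)⁻¹ ^ 2 := by
    simp [rho3eps, bellProj, ketBra, phi1eps, bell, ket]
    ring
  rw [h, inv_sqrt_two_sq, inv_sqrt_one_add_sq_sq]
  push_cast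
  ring

lemma sq_le_of_posSemidef_partialTranspose_rho3eps {l1 l2 l3 ε : ℝ}
    (h : (partialTranspose (rho3eps l1 l2 l3 ε)).PosSemidef) :
    ((l1 / (1 + ε ^ 2) - l3) / 2) ^ 2 ≤ l2 * (l1 * ε ^ 2 / (1 + ε ^ 2)) := by
  have hminor := norm_apply_sq_le_of_posSemidef_partialTranspose h 0 1 0 1
  rw [rho3eps_apply_zero_one, rho3eps_apply_one_zero, rho3eps_apply_coherence,
    Complex.norm_real, Real.norm_eq_abs] at hminor
  rw [← sq_abs, ← Complex.real_le_real]
  push_cast at hminor ⊢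
  exact hminor

lemma eventually_not_posSemidef_partialTranspose_rho3eps {l1 l3 : ℝ} (l2 : ℝ) (hne : l1 ≠ l3) :
    ∀ᶠ ε in 𝓝 0, ¬ (partialTranspose (rho3eps l1 l2 l3 ε)).PosSemidef := by
  have hlt : ∀ᶠ ε : ℝ in 𝓝 0,
      l2 * (l1 * ε ^ 2 / (1 + ε ^ 2)) < ((l1 / (1 + ε ^ 2) - l3) / 2) ^ 2 := by
    refine ContinuousAt.eventually_lt (by fun_prop (disch := simp)) (by fun_prop (disch := simp)) ?_
    have := sub_ne_zero.mpr hne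
    simp only [ne_eq, OfNat.ofNat_ne_zero, not_false_eq_true, zero_pow, mul_zero, add_zero, div_one]
    positivity
  exact hlt.mono fun ε hε hppt =>
    hε.not_ge (sq_le_of_posSemidef_partialTranspose_rho3eps hppt)

theorem not_exists_isSEP_rho3eps {l1 l2 l3 ε : ℝ} (h1 : 0 < l1) (h2 : 0 < l2) (h3 : 0 < l3)
    (hε : ε ≠ 0) (hppt : ¬ (partialTranspose (rho3eps l1 l2 l3 ε)).PosSemidef) :
    ¬ ∃ T : Mat4 → Mat4, IsSEP T ∧ T (rho3eps l1 l2 l3 0) = rho3eps l1 l2 l3 ε := by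
  rintro ⟨T, hT, hTρ⟩
  have hdet : (coeffMatrix ((eigenbasis ε).col (1, 0))).det ≠ 0 := by
    rw [det_coeffMatrix_eigenbasis_col, Complex.ofReal_ne_zero]
    positivity
  refine hppt (hTρ ▸ hT.posSemidef_partialTranspose (posSemidef_rho3eps h1.le h2.le h3.le 0)
    (fun y => det_coeffMatrix_eq_zero_of_rho3eps_mulVec_eq_zero h1.ne' h2.ne' h3.ne') ?_ hdet)
  rw [hTρ, rho3eps_mulVec_eigenbasis_col]

theorem no_SEP_rank3_general {l1 l2 l3 : ℝ} (h1 : 0 < l1) (h2 : 0 < l2) (h3 : 0 < l3)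
    (hsum : l1 + l2 + l3 = 1) (hne : l1 ≠ l3) :
    ∀ᶠ ε in 𝓝[≠] (0 : ℝ),
      IsDensity (rho3eps l1 l2 l3 ε) ∧
      (rho3eps l1 l2 l3 ε).charpoly =
        (X - C (l1 : ℂ)) * (X - C (l2 : ℂ)) * (X - C (l3 : ℂ)) * X ∧
      ¬ SepState (rho3eps l1 l2 l3 ε) ∧
      ¬ ∃ T : Mat4 → Mat4, IsSEP T ∧ T (rho3eps l1 l2 l3 0) = rho3eps l1 l2 l3 ε := by
  filter_upwards [self_mem_nhdsWithin, nhdsWithin_le_nhds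
    (eventually_not_posSemidef_partialTranspose_rho3eps l2 hne)] with ε hε hppt
  refine ⟨⟨posSemidef_rho3eps h1.le h2.le h3.le ε, ?_⟩, charpoly_rho3eps l1 l2 l3 ε,
    fun hsep => hppt hsep.posSemidef_partialTranspose, not_exists_isSEP_rho3eps h1 h2 h3 hε hppt⟩
  rw [trace_rho3eps]
  exact_mod_cast hsum

end Family

theorem no_SEP_rank3 (l1 l2 l3 : ℝ) (h12 : l2 ≤ l1) (h23 : l3 ≤ l2) (h3 : 0 < l3)
    (hsum : l1 + l2 + l3 = 1) (hne : l1 ≠ l3) :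
    ∃ ε : ℝ, 0 < ε ∧
      IsDensity (rho3eps l1 l2 l3 ε) ∧
      (rho3eps l1 l2 l3 ε).charpoly =
        (X - C (l1 : ℂ)) * (X - C (l2 : ℂ)) * (X - C (l3 : ℂ)) * X ∧
      ¬ SepState (rho3eps l1 l2 l3 ε) ∧
      ¬ ∃ T : Mat4 → Mat4, IsSEP T ∧ T (rho3eps l1 l2 l3 0) = rho3eps l1 l2 l3 ε := by
  have h2 : 0 < l2 := h3.trans_le h23
  exact (eventually_mem_nhdsWithin.and (nhdsGT_le_nhdsNE 0
    (no_SEP_rank3_general (h2.trans_le h12) h2 h3 hsum hne))).exists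
end
end

section
/- Let λ1 ≥ λ2 ≥ λ3 > 0 with λ1 + λ2 + λ3 = 1 (so λ4 = 0), and suppose 2λ1 − λ2 > 1 and λ2 > λ3. Then there exists no non-entangling (NE) map Λ satisfying Λ(ρ_λ) = σ_λ, where ρ_λ = λ1 Φ1 + λ2 |01⟩⟨01| + λ3 Φ2 and σ_λ = λ1 Φ1 + λ2 Φ2 + λ3 Φ3. -/
open Matrix Kronecker Polynomial
open scoped ComplexOrder

noncomputable section

/- Let `f i X = ⟨Φᵢ|T X|Φᵢ⟩`, where `Φᵢ` is `bell (i - 1)`. A Bell vector has overlap at most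
`1 / 2` with any separable state, so `f i ≤ 1 / 2` on separable states. Averaging this bound over
the product vectors `(|0⟩ + ζ a|1⟩) ⊗ (|0⟩ + ζ̄ b|1⟩)`, `ζ ∈ {1, -1, i, -i}`, turns it into a bound
on the entangled vector `|00⟩ + ab|11⟩` which improves as `f i |01⟩⟨01|` grows: if `f i Φ > 1 / 2`
then `(2 f i Φ - 1)² + 2 f i |01⟩⟨01| ≤ 1` for `Φ = Φ1, Φ2`.

If `T` maps `ρ_λ` to `σ_λ`, then `f 1` takes the value `λ1` on `ρ_λ`, and the gap `λ1 > 2 λ2 + λ3`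
forces `f 1 Φ1 = 1` and `f 1 |01⟩⟨01| = 0`. As `σ_λ` has no `Φ4` component, the separable state
`T |01⟩⟨01|` has weight only on `Φ2` and `Φ3`; its weight on each is at most, hence exactly,
`1 / 2`. So `f 2 |01⟩⟨01| = 1 / 2`, whence `f 2 Φ2 ≤ 1 / 2`, and since `f 2 Φ1 = 0` the `Φ2` weight
of `σ_λ` is at most `(λ2 + λ3) / 2 < λ2`. -/

lemma two_mul_norm_le_sum_norm_of_sum_eq_zero {ι E : Type*} [SeminormedAddCommGroup E]
    {s : Finset ι} {z : ι → E} (hz : ∑ j ∈ s, z j = 0) {i : ι} (hi : i ∈ s) :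
    2 * ‖z i‖ ≤ ∑ j ∈ s, ‖z j‖ := by
  classical
  have h : z i = -∑ j ∈ s.erase i, z j := by
    rw [eq_neg_iff_add_eq_zero, Finset.add_sum_erase s z hi, hz]
  calc 2 * ‖z i‖ = ‖z i‖ + ‖∑ j ∈ s.erase i, z j‖ := by rw [two_mul]; nth_rw 2 [h]; rw [norm_neg]
    _ ≤ ‖z i‖ + ∑ j ∈ s.erase i, ‖z j‖ := by gcongr; exact norm_sum_le _ _
    _ = ∑ j ∈ s, ‖z j‖ := Finset.add_sum_erase s (fun j => ‖z j‖) hi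

section Dyad

variable {m n : Type*}

/-- The unnormalised pure state `|v⟩⟨v|`. -/
def dyad (v : n → ℂ) : Matrix n n ℂ := vecMulVec v (star v)

lemma dyad_apply (v : n → ℂ) (i j : n) : dyad v i j = v i * star (v j) := rfl

lemma dyad_smul (c : ℂ) (v : n → ℂ) : dyad (c • v) = Complex.normSq c • dyad v := by
  ext i j
  simp only [Matrix.smul_apply, dyad_apply, Pi.smul_apply, smul_eq_mul, star_mul',
    Complex.real_smul, Complex.normSq_eq_conj_mul_self, starRingEnd_apply]
  ring

lemma dyad_add_add_dyad_sub (x y : n → ℂ) :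
    dyad (x + y) + dyad (x - y) = (2 : ℝ) • (dyad x + dyad y) := by
  ext i j
  simp only [Matrix.add_apply, Matrix.smul_apply, dyad_apply, Pi.add_apply, Pi.sub_apply, star_add,
    star_sub, Complex.real_smul, Complex.ofReal_ofNat]
  ring

lemma posSemidef_dyad [Finite n] (v : n → ℂ) : (dyad v).PosSemidef :=
  posSemidef_vecMulVec_self_star v

lemma trace_dyad [Fintype n] (v : n → ℂ) :
    (dyad v).trace = ((∑ x, Complex.normSq (v x) : ℝ) : ℂ) := by
  simp [dyad, trace_vecMulVec, dotProduct, Complex.mul_conj]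

/-- The product vector `u ⊗ v`. -/
def tensorVec (u : m → ℂ) (v : n → ℂ) : m × n → ℂ := fun p => u p.1 * v p.2

lemma smul_tensorVec_smul (a b : ℂ) (u : m → ℂ) (v : n → ℂ) :
    tensorVec (a • u) (b • v) = (a * b) • tensorVec u v := by
  ext p
  simp only [tensorVec, Pi.smul_apply, smul_eq_mul]
  ring

lemma dyad_tensorVec (u : m → ℂ) (v : n → ℂ) : dyad (tensorVec u v) = dyad u ⊗ₖ dyad v := by
  ext p q
  simp only [dyad_apply, tensorVec, kroneckerMap_apply, star_mul']
  ring

-- The cross terms average out over `(u₀ + ζ u₁) ⊗ (v₀ + ζ̄ v₁)` with `ζ ∈ {1, -1, i, -i}`, except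
-- the one between `u₀ ⊗ v₀` and `u₁ ⊗ v₁`, which does not depend on `ζ`.
lemma sum_dyad_tensorVec_phases (u₀ u₁ : m → ℂ) (v₀ v₁ : n → ℂ) :
    dyad (tensorVec (u₀ + u₁) (v₀ + v₁)) + dyad (tensorVec (u₀ - u₁) (v₀ - v₁)) +
        (dyad (tensorVec (u₀ + Complex.I • u₁) (v₀ - Complex.I • v₁)) +
          dyad (tensorVec (u₀ - Complex.I • u₁) (v₀ + Complex.I • v₁))) =
      (4 : ℝ) • (dyad (tensorVec u₀ v₀ + tensorVec u₁ v₁) + dyad (tensorVec u₀ v₁) +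
        dyad (tensorVec u₁ v₀)) := by
  set x := tensorVec u₀ v₀ + tensorVec u₁ v₁ with hx
  set y := tensorVec u₀ v₁ with hy
  set z := tensorVec u₁ v₀ with hz
  have h_one : tensorVec (u₀ + u₁) (v₀ + v₁) = x + (y + z) := by
    ext p; simp only [hx, hy, hz, tensorVec, Pi.add_apply]; ring
  have h_neg : tensorVec (u₀ - u₁) (v₀ - v₁) = x - (y + z) := by
    ext p; simp only [hx, hy, hz, tensorVec, Pi.add_apply, Pi.sub_apply]; ring
  have h_I : tensorVec (u₀ + Complex.I • u₁) (v₀ - Complex.I • v₁) =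
      x - Complex.I • (y - z) := by
    ext p
    simp only [hx, hy, hz, tensorVec, Pi.add_apply, Pi.sub_apply, Pi.smul_apply, smul_eq_mul]
    linear_combination (-u₁ p.1 * v₁ p.2) * Complex.I_mul_I
  have h_negI : tensorVec (u₀ - Complex.I • u₁) (v₀ + Complex.I • v₁) =
      x + Complex.I • (y - z) := by
    ext p
    simp only [hx, hy, hz, tensorVec, Pi.add_apply, Pi.sub_apply, Pi.smul_apply, smul_eq_mul]
    linear_combination (-u₁ p.1 * v₁ p.2) * Complex.I_mul_I
  rw [h_one, h_neg, h_I, h_negI, dyad_add_add_dyad_sub, add_comm (dyad (x - _)),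
    dyad_add_add_dyad_sub, dyad_smul, Complex.normSq_I, one_smul]
  calc (2 : ℝ) • (dyad x + dyad (y + z)) + (2 : ℝ) • (dyad x + dyad (y - z))
      = (4 : ℝ) • dyad x + (2 : ℝ) • (dyad (y + z) + dyad (y - z)) := by module
    _ = (4 : ℝ) • (dyad x + dyad y + dyad z) := by rw [dyad_add_add_dyad_sub]; module

end Dyad

section Overlap

variable {n ι : Type*} [Fintype n]

/-- The expectation value `⟨w|X|w⟩` of a Hermitian matrix `X` in the state `w`; taking the real
part makes it a real-linear functional on all matrices. -/
def overlap (w : n → ℂ) : Matrix n n ℂ →ₗ[ℝ] ℝ where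
  toFun X := (star w ⬝ᵥ X *ᵥ w).re
  map_add' X Y := by simp only [add_mulVec, dotProduct_add, Complex.add_re]
  map_smul' c X := by
    simp only [smul_mulVec, dotProduct_smul, Complex.smul_re, smul_eq_mul, RingHom.id_apply]

lemma overlap_apply (w : n → ℂ) (X : Matrix n n ℂ) :
    overlap w X = (star w ⬝ᵥ X *ᵥ w).re := rfl

lemma overlap_nonneg (w : n → ℂ) {X : Matrix n n ℂ} (hX : X.PosSemidef) : 0 ≤ overlap w X :=
  hX.re_dotProduct_nonneg w

lemma overlap_dyad (w v : n → ℂ) : overlap w (dyad v) = Complex.normSq (star w ⬝ᵥ v) := by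
  have h : star v ⬝ᵥ w = star (star w ⬝ᵥ v) := by rw [star_dotProduct]
  rw [overlap_apply, dyad, vecMulVec_mulVec, dotProduct_smul, op_smul_eq_smul, smul_eq_mul, h,
    ← starRingEnd_apply, ← Complex.normSq_eq_conj_mul_self, Complex.ofReal_re]

lemma sum_overlap_eq_trace [Fintype ι] [DecidableEq n] {w : ι → n → ℂ}
    (hw : ∑ i, dyad (w i) = 1) (X : Matrix n n ℂ) : ∑ i, overlap (w i) X = X.trace.re := by
  have h (i : ι) : star (w i) ⬝ᵥ X *ᵥ w i = (X * dyad (w i)).trace := by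
    rw [dyad, mul_vecMulVec, trace_vecMulVec, dotProduct_comm]
  simp only [overlap_apply, h, ← Complex.re_sum, ← trace_sum, ← Finset.mul_sum, hw, mul_one]

end Overlap

section BellBasis

lemma ketBra_self (v : Vec4) : ketBra v v = dyad v := rfl

lemma bellProj_eq_dyad (i : Fin 4) : bellProj i = dyad (bell i) := rfl

lemma normSq_inv_sqrt_two : Complex.normSq (Real.sqrt 2 : ℂ)⁻¹ = 1 / 2 := by
  rw [map_inv₀, Complex.normSq_ofReal, Real.mul_self_sqrt zero_le_two, one_div]

lemma inv_sqrt_two_mul_self : (Real.sqrt 2 : ℂ)⁻¹ * (Real.sqrt 2 : ℂ)⁻¹ = 1 / 2 := by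
  rw [← mul_inv, ← Complex.ofReal_mul, Real.mul_self_sqrt zero_le_two, one_div]
  rfl

lemma bellProj_zero : bellProj 0 = (1 / 2 : ℝ) • dyad (ket 0 0 + ket 1 1) := by
  rw [← normSq_inv_sqrt_two, ← dyad_smul]
  rfl

lemma bellProj_one : bellProj 1 = (1 / 2 : ℝ) • dyad (ket 0 0 - ket 1 1) := by
  rw [← normSq_inv_sqrt_two, ← dyad_smul]
  rfl

lemma bellProj_zero_add_bellProj_one :
    bellProj 0 + bellProj 1 = dyad (ket 0 0) + dyad (ket 1 1) := by
  rw [bellProj_zero, bellProj_one, ← smul_add, dyad_add_add_dyad_sub]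
  module

lemma star_bell_dotProduct (i : Fin 4) (x : Vec4) :
    star (bell i) ⬝ᵥ x = (Real.sqrt 2 : ℂ)⁻¹ *
      ![x (0, 0) + x (1, 1), x (0, 0) - x (1, 1), x (1, 0) + x (0, 1), x (1, 0) - x (0, 1)] i := by
  fin_cases i <;>
    simp [bell, ket, dotProduct, Fintype.sum_prod_type, Complex.conj_ofReal] <;> ring

lemma sum_dyad_bell : ∑ i, dyad (bell i) = 1 := by
  ext ⟨a, b⟩ ⟨c, d⟩
  fin_cases a <;> fin_cases b <;> fin_cases c <;> fin_cases d <;>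
    simp [Fin.sum_univ_four, dyad_apply, bell, ket, one_apply, inv_sqrt_two_mul_self] <;> norm_num

lemma overlap_bell_bellProj (i j : Fin 4) :
    overlap (bell i) (bellProj j) = if i = j then 1 else 0 := by
  have h : Complex.normSq ((Real.sqrt 2 : ℂ)⁻¹ + (Real.sqrt 2 : ℂ)⁻¹) = 2 := by
    rw [← two_mul, map_mul, normSq_inv_sqrt_two]
    norm_num [Complex.normSq_apply]
  rw [bellProj_eq_dyad, overlap_dyad, star_bell_dotProduct, map_mul, normSq_inv_sqrt_two]
  fin_cases i <;> fin_cases j <;> simp [bell, ket, h]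

lemma overlap_bell_bdiag (l1 l2 l3 l4 : ℝ) (i : Fin 4) :
    overlap (bell i) (bdiag l1 l2 l3 l4) = ![l1, l2, l3, l4] i := by
  simp only [bdiag, Complex.coe_smul, map_add, map_smul, overlap_bell_bellProj]
  fin_cases i <;> simp

lemma map_mems (f : Mat4 →ₗ[ℝ] ℝ) (l1 l2 l3 l4 : ℝ) :
    f (mems l1 l2 l3 l4) = l1 * f (bellProj 0) + l2 * f (dyad (ket 0 1)) + l3 * f (bellProj 1) +
      l4 * f (dyad (ket 1 0)) := by
  simp only [mems, ketBra_self, Complex.coe_smul, map_add, map_smul, smul_eq_mul]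

end BellBasis

section Separable

lemma isUnitVec_iff (u : Fin 2 → ℂ) : IsUnitVec u ↔ (dyad u).trace = 1 := by
  rw [trace_dyad, IsUnitVec, Complex.ofReal_eq_one]

lemma isUnitVec_single (i : Fin 2) : IsUnitVec (Pi.single i 1) := by
  fin_cases i <;> simp [IsUnitVec]

lemma exists_isUnitVec_smul (u : Fin 2 → ℂ) :
    ∃ (r : ℂ) (e : Fin 2 → ℂ), IsUnitVec e ∧
      Complex.normSq r = ∑ x, Complex.normSq (u x) ∧ u = r • e := by
  set N := ∑ x, Complex.normSq (u x)
  have hnonneg : 0 ≤ N := Finset.sum_nonneg fun x _ => Complex.normSq_nonneg (u x)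
  have hr : Complex.normSq (Real.sqrt N : ℂ) = N := by
    rw [Complex.normSq_ofReal, Real.mul_self_sqrt hnonneg]
  refine ⟨Real.sqrt N, ?_⟩
  rcases eq_or_ne N 0 with h0 | h0
  · refine ⟨Pi.single 0 1, isUnitVec_single 0, hr, funext fun x => ?_⟩
    have hx := (Finset.sum_eq_zero_iff_of_nonneg fun y _ => Complex.normSq_nonneg (u y)).1 h0 x
      (Finset.mem_univ x)
    simp [h0, Complex.normSq_eq_zero.1 hx]
  · have hr0 : (Real.sqrt N : ℂ) ≠ 0 := by
      rw [← Complex.normSq_pos, hr]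
      exact hnonneg.lt_of_ne' h0
    refine ⟨(Real.sqrt N : ℂ)⁻¹ • u, ?_, hr, (smul_inv_smul₀ hr0 u).symm⟩
    simp only [IsUnitVec, Pi.smul_apply, smul_eq_mul, map_mul, map_inv₀, hr, ← Finset.mul_sum]
    exact inv_mul_cancel₀ h0

lemma sepState_dyad_tensorVec {u v : Fin 2 → ℂ} (hu : IsUnitVec u) (hv : IsUnitVec v) :
    SepState (dyad (tensorVec u v)) :=
  ⟨1, fun _ => 1, fun _ => u, fun _ => v, by simp, by simp, fun _ => hu, fun _ => hv,
    by rw [dyad_tensorVec]; simp [dyad]⟩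

lemma tensorVec_single (i j : Fin 2) : tensorVec (Pi.single i 1) (Pi.single j 1) = ket i j := by
  ext ⟨p, q⟩
  simp [tensorVec, ket, Pi.single_apply, ← ite_and, and_comm]

lemma sepState_dyad_ket (i j : Fin 2) : SepState (dyad (ket i j)) :=
  tensorVec_single i j ▸ sepState_dyad_tensorVec (isUnitVec_single i) (isUnitVec_single j)

lemma trace_dyad_tensorVec {u v : Fin 2 → ℂ} (hu : IsUnitVec u) (hv : IsUnitVec v) :
    (dyad (tensorVec u v)).trace = 1 := by
  rw [dyad_tensorVec, trace_kronecker, (isUnitVec_iff u).1 hu, (isUnitVec_iff v).1 hv, one_mul]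

lemma SepState.trace_eq_one {ρ : Mat4} (hρ : SepState ρ) : ρ.trace = 1 := by
  obtain ⟨n, p, u, v, -, hp, hu, hv, rfl⟩ := hρ
  have h (i : Fin n) : (vecMulVec (u i) (star (u i)) ⊗ₖ vecMulVec (v i) (star (v i))).trace = 1 :=
    dyad_tensorVec (u i) (v i) ▸ trace_dyad_tensorVec (hu i) (hv i)
  simp only [trace_sum, trace_smul, h, smul_eq_mul, mul_one, ← Complex.ofReal_sum, hp,
    Complex.ofReal_one]

lemma SepState.map_le {f : Mat4 →ₗ[ℝ] ℝ} {c : ℝ}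
    (hf : ∀ u v, IsUnitVec u → IsUnitVec v → f (dyad (tensorVec u v)) ≤ c)
    {ρ : Mat4} (hρ : SepState ρ) : f ρ ≤ c := by
  obtain ⟨n, p, u, v, hp, hsum, hu, hv, rfl⟩ := hρ
  calc f (∑ i, (p i : ℂ) • (vecMulVec (u i) (star (u i)) ⊗ₖ vecMulVec (v i) (star (v i))))
      = ∑ i, p i * f (dyad (tensorVec (u i) (v i))) := by
        simp only [dyad_tensorVec, Complex.coe_smul, map_sum, map_smul, smul_eq_mul]
        rfl
    _ ≤ ∑ i, p i * c :=
        Finset.sum_le_sum fun i _ => mul_le_mul_of_nonneg_left (hf _ _ (hu i) (hv i)) (hp i)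
    _ = c := by rw [← Finset.sum_mul, hsum, one_mul]

-- In the Bell basis the determinant `x₀₀ x₁₁ - x₀₁ x₁₀`, which vanishes on product vectors, is the
-- signed sum of squares of the coordinates.
lemma sum_sign_mul_star_bell_dotProduct_tensorVec_sq (u v : Fin 2 → ℂ) :
    ∑ i, ![1, -1, -1, 1] i * (star (bell i) ⬝ᵥ tensorVec u v) ^ 2 = 0 := by
  simp only [star_bell_dotProduct, tensorVec, Fin.sum_univ_four, cons_val_zero, cons_val_one,
    cons_val, one_mul, neg_mul]
  ring

lemma overlap_bell_dyad_tensorVec_le {u v : Fin 2 → ℂ} (hu : IsUnitVec u) (hv : IsUnitVec v)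
    (i : Fin 4) : overlap (bell i) (dyad (tensorVec u v)) ≤ 1 / 2 := by
  have hnorm (j : Fin 4) : ‖![1, -1, -1, 1] j * (star (bell j) ⬝ᵥ tensorVec u v) ^ 2‖ =
      overlap (bell j) (dyad (tensorVec u v)) := by
    have hsign : ‖(![1, -1, -1, 1] : Fin 4 → ℂ) j‖ = 1 := by fin_cases j <;> simp
    rw [norm_mul, hsign, one_mul, norm_pow, overlap_dyad, Complex.normSq_eq_norm_sq]
  have hsum : ∑ j, overlap (bell j) (dyad (tensorVec u v)) = 1 := by
    rw [sum_overlap_eq_trace sum_dyad_bell, trace_dyad_tensorVec hu hv, Complex.one_re]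
  have h := two_mul_norm_le_sum_norm_of_sum_eq_zero
    (sum_sign_mul_star_bell_dotProduct_tensorVec_sq u v) (Finset.mem_univ i)
  simp only [hnorm, hsum] at h
  linarith

lemma SepState.overlap_bell_le {ρ : Mat4} (hρ : SepState ρ) (i : Fin 4) :
    overlap (bell i) ρ ≤ 1 / 2 :=
  hρ.map_le fun _ _ hu hv => overlap_bell_dyad_tensorVec_le hu hv i

end Separable

section BoundedOnSeparable

variable {f : Mat4 →ₗ[ℝ] ℝ} {c : ℝ}

lemma map_dyad_tensorVec_le (hf : ∀ ρ, SepState ρ → f ρ ≤ c) (u v : Fin 2 → ℂ) :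
    f (dyad (tensorVec u v)) ≤
      c * ((∑ x, Complex.normSq (u x)) * ∑ x, Complex.normSq (v x)) := by
  obtain ⟨r, e, he, hr, rfl⟩ := exists_isUnitVec_smul u
  obtain ⟨s, e', he', hs, rfl⟩ := exists_isUnitVec_smul v
  rw [smul_tensorVec_smul, dyad_smul, map_smul, smul_eq_mul, map_mul, ← hr, ← hs, mul_comm c]
  exact mul_le_mul_of_nonneg_left (hf _ (sepState_dyad_tensorVec he he'))
    (mul_nonneg (Complex.normSq_nonneg r) (Complex.normSq_nonneg s))

lemma sum_normSq_single_add_smul_single (z : ℂ) :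
    ∑ x, Complex.normSq ((Pi.single 0 1 + z • Pi.single 1 1 : Fin 2 → ℂ) x) =
      1 + Complex.normSq z := by
  simp [Fin.sum_univ_two]

lemma map_dyad_ket_phases_le (hf : ∀ ρ, SepState ρ → f ρ ≤ c) (a b : ℂ) :
    f (dyad (ket 0 0 + (a * b) • ket 1 1)) + Complex.normSq b * f (dyad (ket 0 1)) +
        Complex.normSq a * f (dyad (ket 1 0)) ≤
      c * ((1 + Complex.normSq a) * (1 + Complex.normSq b)) := by
  have hphases := congrArg f (sum_dyad_tensorVec_phases
    (Pi.single 0 1) (a • Pi.single 1 1) (Pi.single 0 1) (b • Pi.single (1 : Fin 2) (1 : ℂ)))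
  have h01 : tensorVec (Pi.single 0 1) (b • Pi.single 1 1) = b • ket 0 1 := by
    rw [← tensorVec_single, ← one_mul b, ← smul_tensorVec_smul, one_smul, one_mul]
  have h10 : tensorVec (a • Pi.single 1 1) (Pi.single 0 1) = a • ket 1 0 := by
    rw [← tensorVec_single, ← mul_one a, ← smul_tensorVec_smul, one_smul, mul_one]
  simp only [h01, h10, smul_tensorVec_smul, tensorVec_single, dyad_smul, map_add, map_smul,
    smul_eq_mul] at hphases
  have hle {z w : ℂ} (hz : Complex.normSq z = Complex.normSq a)
      (hw : Complex.normSq w = Complex.normSq b) :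
      f (dyad (tensorVec (Pi.single 0 1 + z • Pi.single 1 1)
        (Pi.single 0 1 + w • Pi.single 1 1))) ≤
        c * ((1 + Complex.normSq a) * (1 + Complex.normSq b)) := by
    have h := map_dyad_tensorVec_le hf (Pi.single 0 1 + z • Pi.single 1 1)
      (Pi.single 0 1 + w • Pi.single 1 1)
    rwa [sum_normSq_single_add_smul_single, sum_normSq_single_add_smul_single, hz, hw] at h
  have h_one := hle rfl rfl
  have h_neg := hle (Complex.normSq_neg a) (Complex.normSq_neg b)
  have h_I := hle (z := Complex.I * a) (w := -(Complex.I * b)) (by simp) (by simp)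
  have h_negI := hle (z := -(Complex.I * a)) (w := Complex.I * b) (by simp) (by simp)
  simp only [neg_smul, ← sub_eq_add_neg, mul_smul] at h_neg h_I h_negI
  linarith

lemma map_dyad_ket_add_smul_ket_le (hf : ∀ ρ, SepState ρ → f ρ ≤ c) {ε : ℂ}
    (hε : Complex.normSq ε = 1) {t : ℝ} (ht : 0 < t) :
    f (dyad (ket 0 0 + ε • ket 1 1)) + t⁻¹ * f (dyad (ket 0 1)) + t * f (dyad (ket 1 0)) ≤
      c * (2 + t + t⁻¹) := by
  have hsqrt : (Real.sqrt t : ℂ) ≠ 0 := Complex.ofReal_ne_zero.2 (Real.sqrt_ne_zero'.2 ht)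
  have ha : Complex.normSq (ε * Real.sqrt t) = t := by
    rw [map_mul, hε, one_mul, Complex.normSq_ofReal, Real.mul_self_sqrt ht.le]
  have hb : Complex.normSq (Real.sqrt t : ℂ)⁻¹ = t⁻¹ := by
    rw [map_inv₀, Complex.normSq_ofReal, Real.mul_self_sqrt ht.le]
  have h := map_dyad_ket_phases_le hf (ε * Real.sqrt t) (Real.sqrt t : ℂ)⁻¹
  have hprod : (1 + t) * (1 + t⁻¹) = 2 + t + t⁻¹ := by field_simp; ring
  rwa [ha, hb, mul_inv_cancel_right₀ hsqrt, hprod] at h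

lemma two_mul_map_dyad_ket_add_sq_le (hf : ∀ ρ, SepState ρ → f ρ ≤ 1 / 2)
    (h10 : 0 ≤ f (dyad (ket 1 0))) {ε : ℂ} (hε : Complex.normSq ε = 1)
    (h : 1 < f (dyad (ket 0 0 + ε • ket 1 1))) :
    2 * f (dyad (ket 0 1)) + (f (dyad (ket 0 0 + ε • ket 1 1)) - 1) ^ 2 ≤ 1 := by
  -- The weighted bound is sharpest at `√(1 - 2 * f (dyad (ket 0 1)))`, which is `t` at equality.
  set t := f (dyad (ket 0 0 + ε • ket 1 1)) - 1 with ht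
  have htpos : 0 < t := sub_pos.2 h
  have hbound := map_dyad_ket_add_smul_ket_le hf hε htpos
  rw [← sub_add_cancel (f (dyad (ket 0 0 + ε • ket 1 1))) 1, ← ht] at hbound
  have hmul : t * t⁻¹ = 1 := mul_inv_cancel₀ htpos.ne'
  have hscaled : t * (t + 1 + t⁻¹ * f (dyad (ket 0 1))) ≤ t * (1 / 2 * (2 + t + t⁻¹)) :=
    mul_le_mul_of_nonneg_left (by linarith [mul_nonneg htpos.le h10]) htpos.le
  linear_combination 2 * hscaled + (1 - 2 * f (dyad (ket 0 1))) * hmul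

lemma map_dyad_ket_zero_one_le (hf : ∀ ρ, SepState ρ → f ρ ≤ 1 / 2)
    (h10 : 0 ≤ f (dyad (ket 1 0))) :
    f (dyad (ket 0 1)) ≤ 2 * (1 - f (bellProj 0)) := by
  have hΦ : f (bellProj 0) = 1 / 2 * f (dyad (ket 0 0 + (1 : ℂ) • ket 1 1)) := by
    rw [bellProj_zero, map_smul, smul_eq_mul, one_smul]
  rcases le_or_gt (f (dyad (ket 0 0 + (1 : ℂ) • ket 1 1))) 1 with h | h
  · linarith [hf _ (sepState_dyad_ket 0 1)]
  · have hquad := two_mul_map_dyad_ket_add_sq_le hf h10 (map_one _) h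
    nlinarith [sq_nonneg (f (dyad (ket 0 0 + (1 : ℂ) • ket 1 1)) - 2)]

lemma map_bellProj_one_le_half (hf : ∀ ρ, SepState ρ → f ρ ≤ 1 / 2)
    (h10 : 0 ≤ f (dyad (ket 1 0))) (h01 : f (dyad (ket 0 1)) = 1 / 2) :
    f (bellProj 1) ≤ 1 / 2 := by
  have hΦ : f (bellProj 1) = 1 / 2 * f (dyad (ket 0 0 + (-1 : ℂ) • ket 1 1)) := by
    rw [bellProj_one, map_smul, smul_eq_mul, neg_one_smul, sub_eq_add_neg]
  by_contra! h
  have hquad := two_mul_map_dyad_ket_add_sq_le hf h10 (ε := -1) (by simp) (by linarith)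
  nlinarith

lemma map_bellProj_zero_le_one (hf : ∀ ρ, SepState ρ → f ρ = 1) : f (bellProj 0) ≤ 1 := by
  have h := map_dyad_ket_add_smul_ket_le (fun ρ hρ => (hf ρ hρ).le) (map_one Complex.normSq)
    one_pos
  rw [hf _ (sepState_dyad_ket 0 1), hf _ (sepState_dyad_ket 1 0), one_smul] at h
  rw [bellProj_zero, map_smul, smul_eq_mul]
  linarith

lemma map_bellProj_zero_add_map_bellProj_one_le (hf : ∀ ρ, SepState ρ → f ρ ≤ c) :
    f (bellProj 0) + f (bellProj 1) ≤ 2 * c := by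
  rw [← map_add, bellProj_zero_add_bellProj_one, map_add, two_mul]
  exact add_le_add (hf _ (sepState_dyad_ket 0 0)) (hf _ (sepState_dyad_ket 1 1))

lemma one_le_map_bellProj_zero_of_le_map_mems (hf : ∀ ρ, SepState ρ → f ρ ≤ 1 / 2)
    (h10 : 0 ≤ f (dyad (ket 1 0))) {l1 l2 l3 : ℝ} (h2 : 0 ≤ l2) (h3 : 0 ≤ l3)
    (h1 : 2 * l2 + l3 < l1) (h : l1 ≤ f (mems l1 l2 l3 0)) : 1 ≤ f (bellProj 0) := by
  by_contra! hlt
  have hket := mul_le_mul_of_nonneg_left (map_dyad_ket_zero_one_le hf h10) h2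
  have hbell : l3 * f (bellProj 1) ≤ l3 * (1 - f (bellProj 0)) :=
    mul_le_mul_of_nonneg_left (by linarith [map_bellProj_zero_add_map_bellProj_one_le hf]) h3
  have hgap := mul_pos (sub_pos.2 h1) (sub_pos.2 hlt)
  rw [map_mems] at h
  linarith

end BoundedOnSeparable

section SeparabilityPreserving

lemma overlap_bell_eq_zero_of_one_le {X : Mat4} (hX : X.PosSemidef) (htr : X.trace.re ≤ 1)
    {i j : Fin 4} (hi : 1 ≤ overlap (bell i) X) (hij : i ≠ j) : overlap (bell j) X = 0 := by
  have hsum : overlap (bell i) X + overlap (bell j) X ≤ 1 := by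
    calc overlap (bell i) X + overlap (bell j) X = ∑ k ∈ {i, j}, overlap (bell k) X :=
          (Finset.sum_pair (f := fun k => overlap (bell k) X) hij).symm
      _ ≤ ∑ k, overlap (bell k) X :=
          Finset.sum_le_univ_sum_of_nonneg fun k => overlap_nonneg _ hX
      _ ≤ 1 := by rwa [sum_overlap_eq_trace sum_dyad_bell]
  linarith [overlap_nonneg (bell j) hX]

lemma SepState.overlap_bell_one_eq_half {ρ : Mat4} (hρ : SepState ρ)
    (h0 : overlap (bell 0) ρ = 0) (h3 : overlap (bell 3) ρ = 0) : overlap (bell 1) ρ = 1 / 2 := by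
  have hsum := sum_overlap_eq_trace sum_dyad_bell ρ
  rw [Fin.sum_univ_four, h0, h3, hρ.trace_eq_one, Complex.one_re] at hsum
  linarith [hρ.overlap_bell_le 1, hρ.overlap_bell_le 2]

variable {T : Mat4 →ₗ[ℝ] Mat4}

lemma trace_map_bellProj_zero_le_one (hsep : ∀ ρ, SepState ρ → SepState (T ρ)) :
    (T (bellProj 0)).trace.re ≤ 1 := by
  rw [← sum_overlap_eq_trace sum_dyad_bell]
  have hf : ∀ ρ, SepState ρ → (∑ i, overlap (bell i) ∘ₗ T) ρ = 1 := fun ρ hρ => by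
    simp [sum_overlap_eq_trace sum_dyad_bell, (hsep ρ hρ).trace_eq_one]
  simpa using map_bellProj_zero_le_one hf

lemma overlap_map_dyad_ket_eq_zero (hpos : ∀ X : Mat4, X.PosSemidef → (T X).PosSemidef)
    {w : Vec4} {l1 l2 l3 : ℝ} (h1 : 0 ≤ l1) (h2 : 0 < l2) (h3 : 0 ≤ l3)
    (h : overlap w (T (mems l1 l2 l3 0)) = 0) : overlap w (T (dyad (ket 0 1))) = 0 := by
  have hnonneg (v : Vec4) : 0 ≤ overlap w (T (dyad v)) :=
    overlap_nonneg w (hpos _ (posSemidef_dyad v))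
  have hmems := map_mems (overlap w ∘ₗ T) l1 l2 l3 0
  simp only [LinearMap.comp_apply, h, bellProj_eq_dyad, zero_mul, add_zero] at hmems
  have hzero : l2 * overlap w (T (dyad (ket 0 1))) = 0 := by
    linarith [mul_nonneg h1 (hnonneg (bell 0)), mul_nonneg h2.le (hnonneg (ket 0 1)),
      mul_nonneg h3 (hnonneg (bell 1))]
  exact (mul_eq_zero.1 hzero).resolve_left h2.ne'

theorem no_NE_rank3_general (hpos : ∀ X : Mat4, X.PosSemidef → (T X).PosSemidef)
    (hsep : ∀ ρ, SepState ρ → SepState (T ρ)) {l1 l2 l3 : ℝ} (h3 : 0 ≤ l3) (h23 : l3 < l2)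
    (h1 : 2 * l2 + l3 < l1) : T (mems l1 l2 l3 0) ≠ bdiag l1 l2 l3 0 := by
  intro hT
  let f (i : Fin 4) : Mat4 →ₗ[ℝ] ℝ := overlap (bell i) ∘ₗ T
  have hle (i : Fin 4) (ρ : Mat4) (hρ : SepState ρ) : f i ρ ≤ 1 / 2 :=
    (hsep ρ hρ).overlap_bell_le i
  have hnonneg (i : Fin 4) (v : Vec4) : 0 ≤ f i (dyad v) :=
    overlap_nonneg _ (hpos _ (posSemidef_dyad v))
  have hmems (i : Fin 4) : f i (mems l1 l2 l3 0) = ![l1, l2, l3, 0] i := by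
    rw [← overlap_bell_bdiag, ← hT]; rfl
  have h00 : 1 ≤ f 0 (bellProj 0) := one_le_map_bellProj_zero_of_le_map_mems (hle 0)
    (hnonneg 0 _) (by linarith) h3 h1 (hmems 0).ge
  have h10 : f 1 (bellProj 0) = 0 := overlap_bell_eq_zero_of_one_le (hpos _ (posSemidef_dyad _))
    (trace_map_bellProj_zero_le_one hsep) h00 (by decide)
  have hket0 : f 0 (dyad (ket 0 1)) = 0 := by
    linarith [map_dyad_ket_zero_one_le (hle 0) (hnonneg 0 _), hnonneg 0 (ket 0 1)]
  have hket3 : f 3 (dyad (ket 0 1)) = 0 :=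
    overlap_map_dyad_ket_eq_zero hpos (by linarith) (by linarith) h3 (hmems 3)
  have hket1 : f 1 (dyad (ket 0 1)) = 1 / 2 :=
    (hsep _ (sepState_dyad_ket 0 1)).overlap_bell_one_eq_half hket0 hket3
  have h11 : f 1 (bellProj 1) ≤ 1 / 2 := map_bellProj_one_le_half (hle 1) (hnonneg 1 _) hket1
  have h := (map_mems (f 1) l1 l2 l3 0).symm.trans (hmems 1)
  simp only [h10, hket1, Matrix.cons_val_one, Matrix.cons_val_zero] at h
  linarith [mul_le_mul_of_nonneg_left h11 h3]

end SeparabilityPreserving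

section Kraus

variable {T : Mat4 → Mat4}

lemma IsCPTP.isLinearMap (hT : IsCPTP T) : IsLinearMap ℝ T := by
  obtain ⟨k, K, -, hK⟩ := hT
  exact
    { map_add X Y := by simp only [hK, mul_add, add_mul, Finset.sum_add_distrib]
      map_smul c X := by simp only [hK, mul_smul_comm, smul_mul_assoc, Finset.smul_sum] }

lemma IsCPTP.posSemidef_map (hT : IsCPTP T) {X : Mat4} (hX : X.PosSemidef) :
    (T X).PosSemidef := by
  obtain ⟨k, K, -, hK⟩ := hT
  rw [hK]
  exact posSemidef_sum _ fun i _ => hX.mul_mul_conjTranspose_same (K i)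

end Kraus

theorem no_NE_rank3 (l1 l2 l3 : ℝ) (h12 : l2 ≤ l1) (h23 : l3 ≤ l2) (h3 : 0 < l3)
    (hsum : l1 + l2 + l3 = 1) (ha : 2 * l1 - l2 > 1) (hb : l2 > l3) :
    ¬ ∃ T : Mat4 → Mat4, IsNE T ∧ T (mems l1 l2 l3 0) = bdiag l1 l2 l3 0 := by
  rintro ⟨T, ⟨hT, hsep⟩, h⟩
  exact no_NE_rank3_general (T := hT.isLinearMap.mk' T) (fun _ => hT.posSemidef_map) hsep h3.le hb
    (by linarith) h
end
end
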